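/- For every n ≥ 2: (i) for all permutations π, σ ∈ S_n, R(π,σ) − d∘(π,σ) ≤ n − 2, where R(π,σ) is the minimum number of right translocations transforming π into σ and d∘ is the translocation distance; and (ii) there exist π, σ ∈ S_n with R(π,σ) − d∘(π,σ) = n − 2 (for instance π = (2,3,…,n,1) and σ = e, for which R(π,σ) = n − 1 and d∘(π,σ) = 1). -/

import Mathlib

/-- `IsMove l l'` holds if `l'` is obtained from `l` by a single translocation:
removing the element at position `i` and reinserting it at position `j`. -/
def IsMove {α : Type*} (l l' : List α) : Prop :=
  ∃ i j : Fin l.length, l' = (l.eraseIdx i).insertIdx j (l.get i)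

/-- `ReachIn step m l l'` holds if `l'` can be obtained from `l` by `m` applications
of the relation `step`. -/
def ReachIn {α : Type*} (step : List α → List α → Prop) : ℕ → List α → List α → Prop
  | 0, l, l' => l = l'
  | m+1, l, l' => ∃ l'', step l l'' ∧ ReachIn step m l'' l'

/-- The one-line notation of a permutation of `Fin n`. -/
def oneLine {n : ℕ} (σ : Equiv.Perm (Fin n)) : List (Fin n) := List.ofFn σ

/-- The translocation distance: the minimum number of translocations transforming
the one-line notation of `σ` into that of `π`. -/
noncomputable def translocDist {n : ℕ} (σ π : Equiv.Perm (Fin n)) : ℕ :=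
  sInf {m | ReachIn IsMove m (oneLine σ) (oneLine π)}

/-- `IsRightMove l l'` holds if `l'` is obtained from `l` by a single right
translocation: removing the element at position `i` and reinserting it at a
position `j ≥ i`. -/
def IsRightMove {α : Type*} (l l' : List α) : Prop :=
  ∃ i j : Fin l.length, (i : ℕ) ≤ (j : ℕ) ∧ l' = (l.eraseIdx i).insertIdx j (l.get i)

/-- `rightTranslocCount π σ` is the minimum number of right translocations
transforming `π` into `σ`. -/
noncomputable def rightTranslocCount {n : ℕ} (π σ : Equiv.Perm (Fin n)) : ℕ :=
  sInf {m | ReachIn IsRightMove m (oneLine π) (oneLine σ)}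

/-!
A right translocation can move any entry to the end, where it stays while the entries before it
are rearranged. Placing the entries of the target from last to first in this way, with no move for
the final one, gives `R(π, σ) ≤ n - 1`; since `d∘(π, σ) ≥ 1` unless `π = σ`, the gap is at most
`n - 2`. Conversely, a right translocation moves any given entry at most one place to the left, so
carrying `1` from the last position of `(2, 3, …, n, 1)` to the first takes `n - 1` of them, while
a single left translocation does it.
-/

theorem ReachIn.lift {α β : Type*} {r : List α → List α → Prop} {s : List β → List β → Prop}
    {f : List α → List β} (hf : ∀ l l', r l l' → s (f l) (f l')) {m : ℕ} {l l' : List α}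
    (h : ReachIn r m l l') : ReachIn s m (f l) (f l') := by
  induction m generalizing l with
  | zero => exact congrArg f h
  | succ m ih =>
    obtain ⟨k, hlk, hkl'⟩ := h
    exact ⟨f k, hf l k hlk, ih hkl'⟩

theorem ReachIn.le_add {α : Type*} {r : List α → List α → Prop} {f : List α → ℕ}
    (hf : ∀ l l', r l l' → f l ≤ f l' + 1) {m : ℕ} {l l' : List α} (h : ReachIn r m l l') :
    f l ≤ f l' + m := by
  induction m generalizing l with
  | zero => exact (congrArg f h).le
  | succ m ih =>
    obtain ⟨k, hlk, hkl'⟩ := h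
    have := hf l k hlk
    have := ih hkl'
    lia

section Moves

variable {α : Type*} {l l' : List α}

theorem insertIdx_length_append (a b : List α) (x : α) :
    (a ++ b).insertIdx a.length x = a ++ x :: b := by
  induction a with
  | nil => simp
  | cons y a ih => simp [ih]

theorem insertIdx_eraseIdx_append (a b c : List α) (x y : α) :
    ((a ++ x :: (b ++ c)).eraseIdx a.length).insertIdx (a.length + b.length) y =
      a ++ (b ++ y :: c) := by
  have erase : (a ++ x :: (b ++ c)).eraseIdx a.length = (a ++ b) ++ c := by
    simp [List.eraseIdx_append_of_length_le]
  rw [erase, ← List.length_append, insertIdx_length_append, List.append_assoc]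

theorem exists_eq_append_cons_append {i j : ℕ} (hij : i ≤ j) (hj : j < l.length) :
    ∃ (a : List α) (x : α) (b c : List α),
      l = a ++ x :: (b ++ c) ∧ a.length = i ∧ a.length + b.length = j :=
  ⟨l.take i, l[i], (l.drop (i + 1)).take (j - i), (l.drop (i + 1)).drop (j - i),
    by simp, by simp; lia, by simp; lia⟩

theorem isRightMove_iff :
    IsRightMove l l' ↔
      ∃ (a : List α) (x : α) (b c : List α), l = a ++ x :: (b ++ c) ∧ l' = a ++ (b ++ x :: c) := by
  constructor
  · rintro ⟨⟨i, hi⟩, ⟨j, hj⟩, hij, rfl⟩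
    obtain ⟨a, x, b, c, rfl, rfl, rfl⟩ := exists_eq_append_cons_append hij hj
    exact ⟨a, x, b, c, rfl, by simp [insertIdx_eraseIdx_append]⟩
  · rintro ⟨a, x, b, c, rfl, rfl⟩
    exact ⟨⟨a.length, by simp⟩, ⟨a.length + b.length, by simp⟩, by simp,
      by simp [insertIdx_eraseIdx_append]⟩

theorem IsRightMove.isMove (h : IsRightMove l l') : IsMove l l' :=
  let ⟨i, j, _, hl'⟩ := h
  ⟨i, j, hl'⟩

theorem isMove_concat_cons (l : List α) (x : α) : IsMove (l ++ [x]) (x :: l) :=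
  ⟨⟨l.length, by simp⟩, ⟨0, by simp⟩, by simp [List.eraseIdx_append_of_length_le]⟩

theorem isRightMove_middle_concat (a b : List α) (x : α) :
    IsRightMove (a ++ x :: b) (a ++ b ++ [x]) :=
  isRightMove_iff.2 ⟨a, x, b, [], by simp, by simp⟩

theorem IsRightMove.append_right (h : IsRightMove l l') (s : List α) :
    IsRightMove (l ++ s) (l' ++ s) := by
  obtain ⟨a, x, b, c, rfl, rfl⟩ := isRightMove_iff.1 h
  exact isRightMove_iff.2 ⟨a, x, b, c ++ s, by simp, by simp⟩

theorem IsRightMove.idxOf_le [DecidableEq α] (h : IsRightMove l l') (z : α) :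
    l.idxOf z ≤ l'.idxOf z + 1 := by
  obtain ⟨a, x, b, c, rfl, rfl⟩ := isRightMove_iff.1 h
  grind

theorem reachIn_isRightMove_of_perm (h : l.Perm l') :
    ReachIn IsRightMove (l'.length - 1) l l' := by
  induction l' using List.reverseRecOn generalizing l with
  | nil => exact h.eq_nil
  | append_singleton t x ih =>
    rcases t.eq_nil_or_concat' with rfl | ⟨t', y, ht⟩
    · exact List.perm_singleton.1 h
    obtain ⟨a, b, rfl⟩ := List.append_of_mem (h.mem_iff.2 (by simp : x ∈ t ++ [x]))
    have hab : (a ++ b).Perm t :=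
      (List.perm_middle.symm.trans (h.trans (List.perm_append_singleton x t))).cons_inv
    have hlen : (t ++ [x]).length - 1 = (t.length - 1) + 1 := by simp [ht]
    rw [hlen]
    exact ⟨a ++ b ++ [x], isRightMove_middle_concat a b x,
      (ih hab).lift fun _ _ hstep => hstep.append_right [x]⟩

end Moves

section Perm

variable {n : ℕ} (π σ : Equiv.Perm (Fin n))

theorem oneLine_injective : Function.Injective (oneLine (n := n)) :=
  List.ofFn_injective.comp Equiv.coe_fn_injective

theorem oneLine_perm : (oneLine π).Perm (oneLine σ) :=
  (π.ofFn_comp_perm id).trans (σ.ofFn_comp_perm id).symm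

theorem idxOf_oneLine (a : Fin n) : (oneLine σ).idxOf a = σ.symm a := by
  have hnodup : (oneLine σ).Nodup := List.nodup_ofFn.2 σ.injective
  simpa [oneLine] using hnodup.idxOf_getElem (σ.symm a) (by simp [oneLine])

theorem reachIn_isRightMove_oneLine :
    ReachIn IsRightMove (n - 1) (oneLine π) (oneLine σ) := by
  simpa [oneLine] using reachIn_isRightMove_of_perm (oneLine_perm π σ)

theorem rightTranslocCount_le : rightTranslocCount π σ ≤ n - 1 :=
  Nat.sInf_le (reachIn_isRightMove_oneLine π σ)

theorem reachIn_rightTranslocCount :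
    ReachIn IsRightMove (rightTranslocCount π σ) (oneLine π) (oneLine σ) :=
  Nat.sInf_mem (s := {m | ReachIn IsRightMove m (oneLine π) (oneLine σ)})
    ⟨n - 1, reachIn_isRightMove_oneLine π σ⟩

theorem reachIn_translocDist :
    ReachIn IsMove (translocDist π σ) (oneLine π) (oneLine σ) :=
  Nat.sInf_mem (s := {m | ReachIn IsMove m (oneLine π) (oneLine σ)})
    ⟨n - 1, (reachIn_isRightMove_oneLine π σ).lift (f := id) fun _ _ => IsRightMove.isMove⟩

theorem rightTranslocCount_self : rightTranslocCount π π = 0 :=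
  Nat.eq_zero_of_le_zero (Nat.sInf_le rfl)

variable {π σ}

theorem translocDist_pos (h : π ≠ σ) : 0 < translocDist π σ := by
  refine Nat.pos_of_ne_zero fun hzero => h (oneLine_injective ?_)
  simpa only [hzero, ReachIn] using reachIn_translocDist π σ

theorem translocDist_eq_one (hne : π ≠ σ) (hmove : IsMove (oneLine π) (oneLine σ)) :
    translocDist π σ = 1 :=
  le_antisymm (Nat.sInf_le ⟨oneLine σ, hmove, rfl⟩) (translocDist_pos hne)

variable (π σ)

theorem symm_apply_le_add_rightTranslocCount (a : Fin n) :
    (π.symm a : ℕ) ≤ σ.symm a + rightTranslocCount π σ := by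
  simpa only [idxOf_oneLine] using
    (reachIn_rightTranslocCount π σ).le_add (f := List.idxOf a) fun _ _ h => h.idxOf_le a

theorem rightTranslocCount_le_translocDist_add :
    rightTranslocCount π σ ≤ translocDist π σ + (n - 2) := by
  rcases eq_or_ne π σ with rfl | hne
  · simp [rightTranslocCount_self]
  · have hR := rightTranslocCount_le π σ
    have hd := translocDist_pos hne
    lia

end Perm

theorem rightTranslocCount_finRotate_one (k : ℕ) :
    rightTranslocCount (finRotate (k + 1)) 1 = k := by
  have hsymm : (finRotate (k + 1)).symm 0 = Fin.last k :=
    (Equiv.symm_apply_eq _).2 finRotate_last.symm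
  refine le_antisymm (rightTranslocCount_le _ _) ?_
  simpa [hsymm, Equiv.Perm.one_def] using
    symm_apply_le_add_rightTranslocCount (finRotate (k + 1)) 1 0

theorem isMove_oneLine_finRotate_one (k : ℕ) :
    IsMove (oneLine (finRotate (k + 1))) (oneLine 1) := by
  have hrotate : oneLine (finRotate (k + 1)) = List.ofFn (Fin.succ (n := k)) ++ [0] := by
    rw [oneLine, List.ofFn_succ_last]
    simp
  have hone : oneLine (1 : Equiv.Perm (Fin (k + 1))) = 0 :: List.ofFn Fin.succ := by
    simp [oneLine, List.ofFn_succ]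
  rw [hrotate, hone]
  exact isMove_concat_cons _ 0

theorem translocDist_finRotate_one (k : ℕ) : translocDist (finRotate (k + 2)) 1 = 1 :=
  translocDist_eq_one isCycle_finRotate.ne_one (isMove_oneLine_finRotate_one (k + 1))

/-- For every `n ≥ 2`: (i) for all `π, σ ∈ S_n`, the gap `R(π,σ) − d∘(π,σ)` between the
right translocation count and the translocation distance is at most `n − 2`; and
(ii) there exist `π, σ ∈ S_n` attaining this gap, namely with `R(π,σ) = n − 1` and
`d∘(π,σ) = 1`, so that `R(π,σ) − d∘(π,σ) = n − 2`. -/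
theorem rightTransloc_gap (n : ℕ) (hn : 2 ≤ n) :
    (∀ π σ : Equiv.Perm (Fin n), rightTranslocCount π σ - translocDist π σ ≤ n - 2) ∧
    (∃ π σ : Equiv.Perm (Fin n), rightTranslocCount π σ = n - 1 ∧ translocDist π σ = 1 ∧
      rightTranslocCount π σ - translocDist π σ = n - 2) := by
  refine ⟨fun π σ => Nat.sub_le_iff_le_add'.2 (rightTranslocCount_le_translocDist_add π σ), ?_⟩
  obtain ⟨k, rfl⟩ := Nat.exists_eq_add_of_le' hn
  have hR : rightTranslocCount (finRotate (k + 2)) 1 = k + 1 :=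
    rightTranslocCount_finRotate_one (k + 1)
  have hd : translocDist (finRotate (k + 2)) 1 = 1 := translocDist_finRotate_one k
  exact ⟨finRotate (k + 2), 1, hR, hd, by rw [hR, hd]; rfl⟩
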